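/- Let n ≥ 2 and let θ ∈ (0, π/2). Then the cone 𝒪_θ ⊆ ℝⁿ does not have the backward uniqueness property, even for the pure heat equation: there exists a bounded smooth function u on 𝒪_θ × (0,1), not identically zero, satisfying ∂ₜu = Δu on 𝒪_θ × (0,1) and u(x,1) = 0 for every x ∈ 𝒪_θ (in the sense of continuous extension as t → 1⁻). -/

import Mathlib

open Real Set Filter

/-- The Laplacian of `f` at `x`, computed as the sum of the second partial
derivatives in the coordinate directions. -/
noncomputable def lap {n : ℕ} (f : EuclideanSpace ℝ (Fin n) → ℝ)
    (x : EuclideanSpace ℝ (Fin n)) : ℝ :=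
  ∑ i, fderiv ℝ (fun y => fderiv ℝ f y (EuclideanSpace.single i 1)) x
      (EuclideanSpace.single i 1)

/-- The open cone `𝒪_θ = {x : x₁ > |x| cos (θ/2)}` in `ℝⁿ`. -/
def cone (n : ℕ) [NeZero n] (θ : ℝ) : Set (EuclideanSpace ℝ (Fin n)) :=
  {x | ‖x‖ * Real.cos (θ / 2) < x 0}

open scoped InnerProductSpace Laplacian Topology
open Module InnerProductSpace

/-!
The Appell transform `F ↦ s ^ (-d / 2) exp (|z|² / 4s) F (z / s)` turns harmonic functions of
`d` variables into solutions of the backward heat equation. In the plane take `F = Re exp (-ζ ^ α)`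
with `2 < α < π / θ`: on the sector `|arg ζ| ≤ θ / 2` it is at most `exp (-c |ζ| ^ α)` with
`c = cos (α θ / 2) > 0`. For `s ≤ 1 ≤ |z|` the other factors are at most `r exp (r² / 4)`, where
`r = |z| / s`, so that the transform is bounded by `r exp (r² / 4 - c r ^ α)`. This is bounded, and
tends to `0` as `s → 0`, since then `r → ∞`. Shifting the cone by `1` guarantees `1 ≤ |z|`.
-/

section SecondDerivative

variable {E F G : Type*} [NormedAddCommGroup E] [NormedSpace ℝ E] [NormedAddCommGroup F]
  [NormedSpace ℝ F] [NormedAddCommGroup G] [NormedSpace ℝ G]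

lemma fderiv_fderiv_comp_clm_add {f : F → G} (L : E →L[ℝ] F) (b : F) {x : E}
    (hf : ContDiffAt ℝ 2 f (L x + b)) (v w : E) :
    fderiv ℝ (fun y => fderiv ℝ (fun y => f (L y + b)) y v) x w =
      iteratedFDeriv ℝ 2 f (L x + b) ![L w, L v] := by
  have hL (y : E) : HasFDerivAt (fun y => L y + b) L y := L.hasFDerivAt.add_const b
  have hfd : ∀ᶠ z in 𝓝 (L x + b), DifferentiableAt ℝ f z :=
    (hf.eventually (by simp)).mono fun z hz => hz.differentiableAt (by norm_num)
  have hchain : (fun y => fderiv ℝ (fun y => f (L y + b)) y v) =ᶠ[𝓝 x]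
      fun y => fderiv ℝ f (L y + b) (L v) :=
    ((hL x).continuousAt.eventually hfd).mono fun y hy => by
      have hcomp : HasFDerivAt (fun y => f (L y + b)) (fderiv ℝ f (L y + b) ∘L L) y :=
        hy.hasFDerivAt.comp y (hL y)
      exact DFunLike.congr_fun hcomp.fderiv v
  have hf' : DifferentiableAt ℝ (fderiv ℝ f) (L x + b) :=
    (hf.fderiv_right (m := 1) (by norm_num)).differentiableAt one_ne_zero
  have hcomp' : HasFDerivAt (fun y => fderiv ℝ f (L y + b))
      (fderiv ℝ (fderiv ℝ f) (L x + b) ∘L L) x := hf'.hasFDerivAt.comp x (hL x)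
  rw [hchain.fderiv_eq, (hcomp'.clm_apply (hasFDerivAt_const (L v) x)).fderiv]
  simp [iteratedFDeriv_two_apply]

lemma fderiv_fderiv_apply_eq_iteratedFDeriv {f : E → G} {x : E} (hf : ContDiffAt ℝ 2 f x)
    (v w : E) :
    fderiv ℝ (fun y => fderiv ℝ f y v) x w = iteratedFDeriv ℝ 2 f x ![w, v] := by
  simpa using fderiv_fderiv_comp_clm_add (.id ℝ E) 0 (x := x) (by simpa using hf) v w

lemma iteratedFDeriv_two_comp_smul {f : E → G} (c : ℝ) {x : E} (hf : ContDiffAt ℝ 2 f (c • x))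
    (v w : E) :
    iteratedFDeriv ℝ 2 (fun y => f (c • y)) x ![w, v] =
      c ^ 2 • iteratedFDeriv ℝ 2 f (c • x) ![w, v] := by
  have hcomp : ContDiffAt ℝ 2 (fun y => f (c • y)) x :=
    hf.comp x (contDiff_const_smul c).contDiffAt
  have h := fderiv_fderiv_comp_clm_add (c • ContinuousLinearMap.id ℝ E) 0 (x := x)
    (by simpa using hf) v w
  rw [← fderiv_fderiv_apply_eq_iteratedFDeriv hcomp]
  simpa [iteratedFDeriv_two_apply, smul_smul, sq] using h

end SecondDerivative

section Laplacian

variable {E G : Type*} [NormedAddCommGroup E] [InnerProductSpace ℝ E] [NormedAddCommGroup G]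
  [NormedSpace ℝ G]

lemma laplacian_comp_smul [FiniteDimensional ℝ E] {f : E → G} (c : ℝ) {x : E}
    (hf : ContDiffAt ℝ 2 f (c • x)) :
    Δ (fun y => f (c • y)) x = c ^ 2 • Δ f (c • x) := by
  simp only [laplacian_eq_iteratedFDeriv_stdOrthonormalBasis, iteratedFDeriv_two_comp_smul c hf,
    Finset.smul_sum]

lemma hasFDerivAt_exp_mul_norm_sq (a : ℝ) (x : E) :
    HasFDerivAt (fun y : E => exp (a * ‖y‖ ^ 2))
      ((2 * a * exp (a * ‖x‖ ^ 2)) • innerSL ℝ x) x := by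
  refine ((hasStrictFDerivAt_norm_sq x).hasFDerivAt.const_mul a).exp.congr_fderiv ?_
  ext v
  simp only [smul_apply, coe_innerSL_apply, nsmul_eq_mul, Nat.cast_ofNat, smul_eq_mul]
  ring

lemma fderiv_exp_mul_norm_sq_smul_apply (a : ℝ) {f : E → G} {x : E} (hf : DifferentiableAt ℝ f x)
    (v : E) :
    fderiv ℝ (fun y => exp (a * ‖y‖ ^ 2) • f y) x v =
      exp (a * ‖x‖ ^ 2) • (fderiv ℝ f x v + (2 * a * ⟪x, v⟫_ℝ) • f x) := by
  rw [((hasFDerivAt_exp_mul_norm_sq a x).fun_smul hf.hasFDerivAt).fderiv]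
  simp only [add_apply, smul_apply, ContinuousLinearMap.smulRight_apply, innerSL_apply_apply,
    smul_eq_mul]
  module

lemma contDiffAt_exp_mul_norm_sq_smul (a : ℝ) {k : WithTop ℕ∞} {f : E → G} {x : E}
    (hf : ContDiffAt ℝ k f x) : ContDiffAt ℝ k (fun y => exp (a * ‖y‖ ^ 2) • f y) x :=
  (contDiffAt_const.mul (contDiff_norm_sq ℝ).contDiffAt).exp.smul hf

lemma iteratedFDeriv_two_exp_mul_norm_sq_smul (a : ℝ) {f : E → G} {x : E}
    (hf : ContDiffAt ℝ 2 f x) (v : E) :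
    iteratedFDeriv ℝ 2 (fun y => exp (a * ‖y‖ ^ 2) • f y) x ![v, v] =
      exp (a * ‖x‖ ^ 2) • (iteratedFDeriv ℝ 2 f x ![v, v] + (4 * a * ⟪x, v⟫_ℝ) • fderiv ℝ f x v
        + (2 * a * ‖v‖ ^ 2 + 4 * a ^ 2 * ⟪x, v⟫_ℝ ^ 2) • f x) := by
  have hfd : ∀ᶠ y in 𝓝 x, DifferentiableAt ℝ f y :=
    (hf.eventually (by simp)).mono fun y hy => hy.differentiableAt (by norm_num)
  have hf' : DifferentiableAt ℝ (fun y => fderiv ℝ f y v) x :=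
    ((hf.fderiv_right (m := 1) (by norm_num)).differentiableAt one_ne_zero).clm_apply
      (differentiableAt_const v)
  have hinner : HasFDerivAt (fun y => 2 * a * ⟪y, v⟫_ℝ) ((2 * a) • innerSL ℝ v) x := by
    simpa [real_inner_comm] using ((innerSL ℝ v).hasFDerivAt (x := x)).const_mul (2 * a)
  have hderiv : (fun y => fderiv ℝ (fun y => exp (a * ‖y‖ ^ 2) • f y) y v) =ᶠ[𝓝 x]
      fun y => exp (a * ‖y‖ ^ 2) • (fderiv ℝ f y v + (2 * a * ⟪y, v⟫_ℝ) • f y) :=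
    hfd.mono fun y hy => fderiv_exp_mul_norm_sq_smul_apply a hy v
  have hterm := hinner.fun_smul hfd.self_of_nhds.hasFDerivAt
  rw [← fderiv_fderiv_apply_eq_iteratedFDeriv (contDiffAt_exp_mul_norm_sq_smul a hf),
    hderiv.fderiv_eq,
    fderiv_exp_mul_norm_sq_smul_apply a (hf'.fun_add hterm.differentiableAt),
    fderiv_fun_add hf' hterm.differentiableAt, hterm.fderiv,
    ← fderiv_fderiv_apply_eq_iteratedFDeriv hf]
  simp only [add_apply, smul_apply, ContinuousLinearMap.smulRight_apply, innerSL_apply_apply,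
    smul_eq_mul, real_inner_self_eq_norm_sq]
  module

lemma laplacian_exp_mul_norm_sq_smul [FiniteDimensional ℝ E] (a : ℝ) {f : E → G} {x : E}
    (hf : ContDiffAt ℝ 2 f x) :
    Δ (fun y => exp (a * ‖y‖ ^ 2) • f y) x =
      exp (a * ‖x‖ ^ 2) • (Δ f x + (4 * a) • fderiv ℝ f x x
        + (2 * a * finrank ℝ E + 4 * a ^ 2 * ‖x‖ ^ 2) • f x) := by
  have hradial : ∑ i, ⟪x, stdOrthonormalBasis ℝ E i⟫_ℝ • fderiv ℝ f x (stdOrthonormalBasis ℝ E i) =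
      fderiv ℝ f x x := by
    simp only [real_inner_comm _ x, ← map_smul, ← map_sum, OrthonormalBasis.sum_repr']
  simp only [laplacian_eq_iteratedFDeriv_stdOrthonormalBasis,
    iteratedFDeriv_two_exp_mul_norm_sq_smul a hf, OrthonormalBasis.norm_eq_one, ← Finset.smul_sum,
    Finset.sum_add_distrib, ← Finset.sum_smul, mul_smul, ← Finset.mul_sum, hradial,
    OrthonormalBasis.sum_sq_inner_left]
  simp

end Laplacian

section Appell

variable {E G : Type*} [NormedAddCommGroup E] [InnerProductSpace ℝ E] [NormedAddCommGroup G]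
  [NormedSpace ℝ G]

/-- The Appell transform of a time-independent function `F` on a `d`-dimensional Euclidean space,
`(z, s) ↦ s ^ (-d / 2) exp (|z|² / 4s) F (z / s)`. It turns harmonic functions into solutions of
the backward heat equation. -/
noncomputable def appell (F : E → G) (z : E) (s : ℝ) : G :=
  (s ^ (-(finrank ℝ E : ℝ) / 2) * exp ((4 * s)⁻¹ * ‖z‖ ^ 2)) • F (s⁻¹ • z)

lemma contDiffAt_appell {F : E → G} {k : WithTop ℕ∞} {z : E} {s : ℝ} (hs : s ≠ 0)
    (hF : ContDiffAt ℝ k F (s⁻¹ • z)) :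
    ContDiffAt ℝ k (fun p : E × ℝ => appell F p.1 p.2) (z, s) := by
  have hinv : ContDiffAt ℝ k (fun p : E × ℝ => p.2⁻¹) (z, s) := contDiffAt_snd.inv hs
  have hpow : ContDiffAt ℝ k (fun p : E × ℝ => p.2 ^ (-(finrank ℝ E : ℝ) / 2)) (z, s) :=
    contDiffAt_snd.rpow_const_of_ne hs
  have hquad : ContDiffAt ℝ k (fun p : E × ℝ => (4 * p.2)⁻¹ * ‖p.1‖ ^ 2) (z, s) := by
    simp only [mul_inv]
    exact (contDiffAt_const.mul hinv).mul (contDiffAt_fst.norm_sq ℝ)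
  exact (hpow.mul hquad.exp).smul (hF.comp (z, s) (hinv.smul contDiffAt_fst))

lemma laplacian_appell [FiniteDimensional ℝ E] {F : E → G} {z : E} {s : ℝ}
    (hF : HarmonicAt F (s⁻¹ • z)) :
    Δ (fun y => appell F y s) z =
      (s ^ (-(finrank ℝ E : ℝ) / 2) * exp ((4 * s)⁻¹ * ‖z‖ ^ 2)) •
        ((s⁻¹ ^ 2) • fderiv ℝ F (s⁻¹ • z) z
          + (finrank ℝ E / 2 * s⁻¹ + ‖z‖ ^ 2 / 4 * s⁻¹ ^ 2) • F (s⁻¹ • z)) := by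
  have hcomp : ContDiffAt ℝ 2 (fun y => F (s⁻¹ • y)) z :=
    hF.1.comp z (contDiff_const_smul s⁻¹).contDiffAt
  have happell : (fun y => appell F y s) = s ^ (-(finrank ℝ E : ℝ) / 2) •
      fun y => exp ((4 * s)⁻¹ * ‖y‖ ^ 2) • F (s⁻¹ • y) := by
    ext y
    simp [appell, mul_smul]
  have hharm : Δ F (s⁻¹ • z) = 0 := hF.2.self_of_nhds
  rw [happell, laplacian_smul _ (contDiffAt_exp_mul_norm_sq_smul _ hcomp),
    laplacian_exp_mul_norm_sq_smul _ hcomp, laplacian_comp_smul _ hF.1, hharm, fderiv_comp_smul]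
  simp only [smul_apply, mul_inv]
  module

lemma hasDerivAt_appell {F : E → G} {z : E} {s : ℝ} (hs : s ≠ 0)
    (hF : DifferentiableAt ℝ F (s⁻¹ • z)) :
    HasDerivAt (appell F z)
      (-(s ^ (-(finrank ℝ E : ℝ) / 2) * exp ((4 * s)⁻¹ * ‖z‖ ^ 2)) •
        ((s⁻¹ ^ 2) • fderiv ℝ F (s⁻¹ • z) z
          + (finrank ℝ E / 2 * s⁻¹ + ‖z‖ ^ 2 / 4 * s⁻¹ ^ 2) • F (s⁻¹ • z))) s := by
  have hinv : HasDerivAt (fun σ : ℝ => σ⁻¹) (-(s⁻¹ ^ 2)) s := by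
    simpa using hasDerivAt_inv hs
  have hpow : HasDerivAt (fun σ : ℝ => σ ^ (-(finrank ℝ E : ℝ) / 2))
      (-(finrank ℝ E : ℝ) / 2 * s⁻¹ * s ^ (-(finrank ℝ E : ℝ) / 2)) s :=
    (hasDerivAt_rpow_const (.inl hs)).congr_deriv (by rw [rpow_sub_one hs]; ring)
  have hquad : HasDerivAt (fun σ : ℝ => (4 * σ)⁻¹ * ‖z‖ ^ 2) (-(‖z‖ ^ 2 / 4 * s⁻¹ ^ 2)) s := by
    simp only [mul_inv]
    exact ((hinv.const_mul 4⁻¹).mul_const (‖z‖ ^ 2)).congr_deriv (by ring)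
  have hprofile := hF.hasFDerivAt.comp_hasDerivAt s (hinv.smul_const z)
  refine ((hpow.mul hquad.exp).smul hprofile).congr_deriv ?_
  simp only [map_smul, Pi.mul_apply, Function.comp_apply]
  module

theorem hasDerivAt_appell_neg_laplacian [FiniteDimensional ℝ E] {F : E → G} {z : E} {s : ℝ}
    (hs : s ≠ 0) (hF : HarmonicAt F (s⁻¹ • z)) :
    HasDerivAt (appell F z) (-Δ (fun y => appell F y s) z) s := by
  rw [laplacian_appell hF, ← neg_smul]
  exact hasDerivAt_appell hs (hF.1.differentiableAt (by norm_num))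

lemma norm_appell_le (F : E → G) {z : E} {s : ℝ} (hs : 0 < s) (hs1 : s ≤ 1) (hz : 1 ≤ ‖z‖) :
    ‖appell F z s‖ ≤ ‖s⁻¹ • z‖ ^ (finrank ℝ E / 2 : ℝ) * exp (‖s⁻¹ • z‖ ^ 2 / 4) *
      ‖F (s⁻¹ • z)‖ := by
  have hr : ‖s⁻¹ • z‖ = s⁻¹ * ‖z‖ := by rw [norm_smul_of_nonneg (inv_nonneg.2 hs.le)]
  have hpow : s ^ (-(finrank ℝ E : ℝ) / 2) ≤ ‖s⁻¹ • z‖ ^ (finrank ℝ E / 2 : ℝ) := by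
    rw [neg_div, rpow_neg hs.le, ← inv_rpow hs.le, hr]
    gcongr
    exact le_mul_of_one_le_right (inv_nonneg.2 hs.le) hz
  have hexp : (4 * s)⁻¹ * ‖z‖ ^ 2 ≤ ‖s⁻¹ • z‖ ^ 2 / 4 := by
    have hsq : s⁻¹ ≤ s⁻¹ ^ 2 := le_self_pow₀ (one_le_inv_iff₀.2 ⟨hs, hs1⟩) two_ne_zero
    calc (4 * s)⁻¹ * ‖z‖ ^ 2 = s⁻¹ * ‖z‖ ^ 2 / 4 := by rw [mul_inv]; ring
      _ ≤ s⁻¹ ^ 2 * ‖z‖ ^ 2 / 4 := by gcongr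
      _ = ‖s⁻¹ • z‖ ^ 2 / 4 := by rw [hr, mul_pow]
  rw [appell, norm_smul_of_nonneg (by positivity)]
  gcongr

end Appell

section Profile

/-- The real part of `exp (-ζ ^ α)`: a harmonic function off the negative real axis, whose Appell
transform is Escauriaza's example. -/
noncomputable def escauriazaProfile (α : ℝ) (ζ : ℂ) : ℝ := (Complex.exp (-ζ ^ (α : ℂ))).re

lemma harmonicAt_escauriazaProfile (α : ℝ) {ζ : ℂ} (hζ : ζ ∈ Complex.slitPlane) :
    HarmonicAt (escauriazaProfile α) ζ :=
  (analyticAt_id.cpow analyticAt_const hζ).neg.cexp.harmonicAt_re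

lemma escauriazaProfile_ofReal (α : ℝ) {r : ℝ} (hr : 0 ≤ r) :
    escauriazaProfile α r = exp (-r ^ α) := by
  rw [escauriazaProfile, ← Complex.ofReal_cpow hr, ← Complex.ofReal_neg, Complex.exp_ofReal_re]

lemma abs_escauriazaProfile_le {α φ : ℝ} {ζ : ℂ} (hα : 0 ≤ α) (hφ : φ * α ≤ π)
    (hζ : |ζ.arg| ≤ φ) :
    |escauriazaProfile α ζ| ≤ exp (-(cos (φ * α) * ‖ζ‖ ^ α)) := by
  have hcos : cos (φ * α) ≤ cos (ζ.arg * α) := by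
    rw [← cos_abs (ζ.arg * α), abs_mul, abs_of_nonneg hα]
    exact cos_le_cos_of_nonneg_of_le_pi (by positivity) hφ (by gcongr)
  calc |escauriazaProfile α ζ| ≤ ‖Complex.exp (-ζ ^ (α : ℂ))‖ := Complex.abs_re_le_norm _
    _ = exp (-(cos (ζ.arg * α) * ‖ζ‖ ^ α)) := by
      rw [Complex.norm_exp, Complex.neg_re, Complex.cpow_ofReal_re, mul_comm]
    _ ≤ exp (-(cos (φ * α) * ‖ζ‖ ^ α)) := by gcongr

lemma cos_half_mul_pos {α θ : ℝ} (hα : 0 ≤ α) (hθ : 0 ≤ θ) (hαθ : α * θ < π) :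
    0 < cos (θ / 2 * α) :=
  cos_pos_of_mem_Ioo ⟨by linarith [pi_pos, mul_nonneg hα hθ], by linarith⟩

end Profile

section Majorant

/-- A bound for Escauriaza's example at distance `r` from the origin in the rescaled variable
`z / s`. -/
noncomputable def majorant (c α r : ℝ) : ℝ := r * exp (r ^ 2 / 4 - c * r ^ α)

lemma tendsto_majorant {c α : ℝ} (hc : 0 < c) (hα : 2 < α) :
    Tendsto (majorant c α) atTop (𝓝 0) := by
  have hlin : Tendsto (fun r : ℝ => r * exp (-r)) atTop (𝓝 0) := by
    simpa using tendsto_pow_mul_exp_neg_atTop_nhds_zero 1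
  have hpow : ∀ᶠ r : ℝ in atTop, 2 / c ≤ r ^ (α - 2) :=
    (tendsto_rpow_atTop (sub_pos.2 hα)).eventually_ge_atTop _
  refine squeeze_zero' ?_ ?_ hlin
  · filter_upwards [eventually_ge_atTop 0] with r hr
    exact mul_nonneg hr (exp_pos _).le
  · filter_upwards [hpow, eventually_ge_atTop 1] with r hr hr1
    have hr0 : 0 < r := one_pos.trans_le hr1
    have hquad : 2 * r ^ 2 ≤ c * r ^ α :=
      calc 2 * r ^ 2 ≤ c * r ^ (α - 2) * r ^ 2 := by gcongr; exact (div_le_iff₀' hc).1 hr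
        _ = c * r ^ α := by rw [mul_assoc, ← rpow_natCast r 2, ← rpow_add hr0]; norm_num
    unfold majorant
    gcongr
    nlinarith

lemma exists_majorant_le {c α : ℝ} (hc : 0 < c) (hα : 2 < α) :
    ∃ M, ∀ r, 0 ≤ r → majorant c α r ≤ M := by
  have hcont : Continuous (majorant c α) :=
    continuous_id.mul (((continuous_pow 2).div_const 4).sub
      ((continuous_rpow_const (by linarith)).const_mul c)).rexp
  obtain ⟨R, hR⟩ := eventually_atTop.1
    ((tendsto_majorant hc hα).eventually (eventually_le_nhds one_pos))
  obtain ⟨B, hB⟩ := (isCompact_Icc (a := 0) (b := R)).bddAbove_image hcont.continuousOn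
  refine ⟨max 1 B, fun r hr => ?_⟩
  rcases le_total R r with hRr | hrR
  · exact (hR r hRr).trans (le_max_left _ _)
  · exact (hB (mem_image_of_mem _ ⟨hr, hrR⟩)).trans (le_max_right _ _)

lemma abs_appell_escauriazaProfile_le {α φ s : ℝ} {z : ℂ} (hs : 0 < s) (hs1 : s ≤ 1)
    (hz : 1 ≤ ‖z‖) (hα : 0 ≤ α) (hφ : φ * α ≤ π) (harg : |z.arg| ≤ φ) :
    |appell (escauriazaProfile α) z s| ≤ majorant (cos (φ * α)) α ‖s⁻¹ • z‖ := by
  have harg' : |(s⁻¹ • z).arg| ≤ φ := by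
    rwa [Complex.real_smul, Complex.arg_real_mul _ (inv_pos.2 hs)]
  have hnorm := norm_appell_le (escauriazaProfile α) hs hs1 hz
  rw [Complex.finrank_real_complex, Nat.cast_ofNat, div_self two_ne_zero, rpow_one] at hnorm
  calc |appell (escauriazaProfile α) z s|
      ≤ ‖s⁻¹ • z‖ * exp (‖s⁻¹ • z‖ ^ 2 / 4) * |escauriazaProfile α (s⁻¹ • z)| := hnorm
    _ ≤ ‖s⁻¹ • z‖ * exp (‖s⁻¹ • z‖ ^ 2 / 4) * exp (-(cos (φ * α) * ‖s⁻¹ • z‖ ^ α)) := by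
      gcongr
      exact abs_escauriazaProfile_le hα hφ harg'
    _ = majorant (cos (φ * α)) α ‖s⁻¹ • z‖ := by
      rw [majorant, mul_assoc, ← exp_add, sub_eq_add_neg]

end Majorant

section Plane

variable {n : ℕ} [NeZero n] {j : Fin n} {x : EuclideanSpace ℝ (Fin n)} {θ : ℝ}

/-- The coordinate projection `x ↦ x₀ + i xⱼ` of `ℝⁿ` onto the complex plane. -/
noncomputable def toPlane (j : Fin n) : EuclideanSpace ℝ (Fin n) →L[ℝ] ℂ :=
  Complex.equivRealProdCLM.symm.toContinuousLinearMap ∘L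
    (EuclideanSpace.proj 0).prod (EuclideanSpace.proj j)

@[simp]
lemma toPlane_re (j : Fin n) (x : EuclideanSpace ℝ (Fin n)) : (toPlane j x).re = x 0 := by
  simp [toPlane]

@[simp]
lemma toPlane_im (j : Fin n) (x : EuclideanSpace ℝ (Fin n)) : (toPlane j x).im = x j := by
  simp [toPlane]

lemma toPlane_single_zero (hj : j ≠ 0) (a : ℝ) :
    toPlane j (EuclideanSpace.single 0 a) = a := by
  apply Complex.ext <;> simp [hj]

lemma toPlane_single_self (hj : j ≠ 0) (a : ℝ) :
    toPlane j (EuclideanSpace.single j a) = a * Complex.I := by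
  apply Complex.ext <;> simp [hj.symm]

lemma toPlane_single_of_ne {i : Fin n} (hi : i ≠ 0) (hij : i ≠ j) (a : ℝ) :
    toPlane j (EuclideanSpace.single i a) = 0 := by
  apply Complex.ext <;> simp [hi.symm, hij.symm]

lemma lap_comp_toPlane_add {f : ℂ → ℝ} (hj : j ≠ 0) (b : ℂ)
    (hf : ContDiffAt ℝ 2 f (toPlane j x + b)) :
    lap (fun y => f (toPlane j y + b)) x = Δ f (toPlane j x + b) := by
  simp only [lap, fderiv_fderiv_comp_clm_add (toPlane j) b hf,
    laplacian_eq_iteratedFDeriv_complexPlane]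
  rw [Finset.sum_eq_add 0 j hj.symm, toPlane_single_zero hj, toPlane_single_self hj]
  · simp
  · intro i _ hi
    rw [toPlane_single_of_ne hi.1 hi.2]
    simp [iteratedFDeriv_two_apply]
  · simp
  · simp

lemma deriv_appell_comp_toPlane_eq_lap {F : ℂ → ℝ} (hj : j ≠ 0) (b : ℂ) {t : ℝ} (ht : t ≠ 1)
    (hF : HarmonicAt F ((1 - t)⁻¹ • (toPlane j x + b))) :
    deriv (fun τ => appell F (toPlane j x + b) (1 - τ)) t =
      lap (fun y => appell F (toPlane j y + b) (1 - t)) x := by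
  have hs : 1 - t ≠ 0 := sub_ne_zero.2 ht.symm
  have hslice : ContDiffAt ℝ 2 (fun z => appell F z (1 - t)) (toPlane j x + b) :=
    ContDiffAt.comp (f := fun z => (z, 1 - t)) _ (contDiffAt_appell hs hF.1)
      (contDiffAt_id.prodMk contDiffAt_const)
  rw [lap_comp_toPlane_add (f := fun z => appell F z (1 - t)) hj b hslice,
    deriv_comp_const_sub (appell F (toPlane j x + b)),
    (hasDerivAt_appell_neg_laplacian hs hF).deriv, neg_neg]

lemma norm_toPlane_le (hj : j ≠ 0) (x : EuclideanSpace ℝ (Fin n)) : ‖toPlane j x‖ ≤ ‖x‖ := by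
  refine le_of_sq_le_sq ?_ (norm_nonneg x)
  calc ‖toPlane j x‖ ^ 2 = ∑ i ∈ {0, j}, ‖x i‖ ^ 2 := by
        rw [Finset.sum_pair hj.symm, ← Complex.normSq_eq_norm_sq, Complex.normSq_apply]
        simp [sq]
    _ ≤ ∑ i, ‖x i‖ ^ 2 := Finset.sum_le_univ_sum_of_nonneg fun i => sq_nonneg _
    _ = ‖x‖ ^ 2 := (EuclideanSpace.norm_sq_eq x).symm

lemma abs_arg_lt_of_norm_mul_cos_lt {z : ℂ} {φ : ℝ} (hφ : 0 ≤ φ) (h : ‖z‖ * cos φ < z.re) :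
    |z.arg| < φ := by
  have hz : z ≠ 0 := by
    rintro rfl
    simp at h
  by_contra! hle
  have hcos : cos z.arg ≤ cos φ := by
    simpa using cos_le_cos_of_nonneg_of_le_pi hφ z.abs_arg_le_pi hle
  rw [Complex.cos_arg hz, div_le_iff₀' (norm_pos_iff.2 hz)] at hcos
  exact hcos.not_gt h

lemma one_le_re_toPlane_add_one (hθ : 0 ≤ cos (θ / 2)) (hx : x ∈ cone n θ) :
    1 ≤ (toPlane j x + 1).re := by
  have hx0 : 0 ≤ x 0 := (mul_nonneg (norm_nonneg x) hθ).trans (le_of_lt hx)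
  simpa using hx0

lemma one_le_norm_toPlane_add_one (hθ : 0 ≤ cos (θ / 2)) (hx : x ∈ cone n θ) :
    1 ≤ ‖toPlane j x + 1‖ :=
  (one_le_re_toPlane_add_one hθ hx).trans (Complex.re_le_norm _)

lemma abs_arg_toPlane_add_one_lt (hj : j ≠ 0) (hθ0 : 0 ≤ θ) (hθ : 0 ≤ cos (θ / 2))
    (hx : x ∈ cone n θ) : |(toPlane j x + 1).arg| < θ / 2 := by
  refine abs_arg_lt_of_norm_mul_cos_lt (by positivity) ?_
  calc ‖toPlane j x + 1‖ * cos (θ / 2) ≤ (‖x‖ + 1) * cos (θ / 2) := by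
        gcongr
        exact (norm_add_le _ _).trans (by simpa using norm_toPlane_le hj x)
    _ = ‖x‖ * cos (θ / 2) + cos (θ / 2) := by ring
    _ < x 0 + 1 := add_lt_add_of_lt_of_le hx (cos_le_one _)
    _ = (toPlane j x + 1).re := by simp

lemma single_mem_cone (hθ0 : 0 < θ) (hθ : θ ≤ 2 * π) : EuclideanSpace.single 0 1 ∈ cone n θ := by
  have hcos : cos (θ / 2) < 1 := by
    simpa using cos_lt_cos_of_nonneg_of_le_pi le_rfl (by linarith : θ / 2 ≤ π) (by positivity)
  simpa [cone] using hcos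

end Plane

section Solution

variable {n : ℕ} [NeZero n] {j : Fin n} {x : EuclideanSpace ℝ (Fin n)} {α θ t : ℝ}

/-- Escauriaza's example with time reversed, as a function on `ℝⁿ` of the coordinates `x₀` and `xⱼ`
alone. The shift by `1` keeps the cone away from the singularity of the profile at `0`. -/
noncomputable def escauriazaSolution (α : ℝ) (j : Fin n) (x : EuclideanSpace ℝ (Fin n)) (t : ℝ) :
    ℝ :=
  appell (escauriazaProfile α) (toPlane j x + 1) (1 - t)

lemma harmonicAt_escauriazaProfile_of_mem_cone (hθ : 0 ≤ cos (θ / 2)) (hx : x ∈ cone n θ)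
    (ht : t < 1) : HarmonicAt (escauriazaProfile α) ((1 - t)⁻¹ • (toPlane j x + 1)) := by
  refine harmonicAt_escauriazaProfile α (.inl ?_)
  rw [Complex.smul_re, smul_eq_mul]
  exact mul_pos (inv_pos.2 (sub_pos.2 ht)) (one_pos.trans_le (one_le_re_toPlane_add_one hθ hx))

lemma contDiffOn_escauriazaSolution (hθ : 0 ≤ cos (θ / 2)) :
    ContDiffOn ℝ (⊤ : ℕ∞) (fun p : EuclideanSpace ℝ (Fin n) × ℝ => escauriazaSolution α j p.1 p.2)
      (cone n θ ×ˢ Iio 1) := by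
  rintro ⟨x, t⟩ ⟨hx, ht⟩
  have hprofile := harmonicAt_escauriazaProfile_of_mem_cone (α := α) (j := j) hθ hx ht
  have harg : ContDiffAt ℝ (⊤ : ℕ∞)
      (fun p : EuclideanSpace ℝ (Fin n) × ℝ => (toPlane j p.1 + 1, 1 - p.2)) (x, t) :=
    (((toPlane j).contDiff.contDiffAt.comp (x, t) contDiffAt_fst).add contDiffAt_const).prodMk
      (contDiffAt_const.sub contDiffAt_snd)
  have happell := contDiffAt_appell (k := (⊤ : ℕ∞)) (sub_pos.2 ht).ne'
    (HarmonicAt.analyticAt hprofile).contDiffAt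
  exact (happell.comp (x, t) harg).contDiffWithinAt

lemma deriv_escauriazaSolution_eq_lap (hj : j ≠ 0) (hθ : 0 ≤ cos (θ / 2)) (hx : x ∈ cone n θ)
    (ht : t < 1) :
    deriv (escauriazaSolution α j x) t = lap (fun y => escauriazaSolution α j y t) x :=
  deriv_appell_comp_toPlane_eq_lap hj 1 ht.ne (harmonicAt_escauriazaProfile_of_mem_cone hθ hx ht)

lemma escauriazaSolution_single_pos (hj : j ≠ 0) {a : ℝ} (ha : 0 ≤ a) (ht : t < 1) :
    0 < escauriazaSolution α j (EuclideanSpace.single 0 a) t := by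
  have := sub_pos.2 ht
  have harg : (1 - t)⁻¹ • (toPlane j (EuclideanSpace.single 0 a) + 1) =
      (((1 - t)⁻¹ * (a + 1) : ℝ) : ℂ) := by
    rw [toPlane_single_zero hj, Complex.real_smul]
    push_cast
    rfl
  rw [escauriazaSolution, appell, harg, escauriazaProfile_ofReal α (by positivity), smul_eq_mul]
  positivity

lemma abs_escauriazaSolution_le (hj : j ≠ 0) (hα : 0 ≤ α) (hθ0 : 0 ≤ θ)
    (hθ : 0 ≤ cos (θ / 2)) (hαθ : θ / 2 * α ≤ π) (hx : x ∈ cone n θ) (ht : t ∈ Ico 0 1) :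
    |escauriazaSolution α j x t| ≤
      majorant (cos (θ / 2 * α)) α ‖(1 - t)⁻¹ • (toPlane j x + 1)‖ :=
  abs_appell_escauriazaProfile_le (sub_pos.2 ht.2) (sub_le_self 1 ht.1)
    (one_le_norm_toPlane_add_one hθ hx) hα hαθ (abs_arg_toPlane_add_one_lt hj hθ0 hθ hx).le

lemma exists_abs_escauriazaSolution_le (hj : j ≠ 0) (hα : 2 < α) (hθ0 : 0 ≤ θ)
    (hθ : 0 ≤ cos (θ / 2)) (hαθ : α * θ < π) :
    ∃ M, ∀ x ∈ cone n θ, ∀ t ∈ Ico (0 : ℝ) 1, |escauriazaSolution α j x t| ≤ M := by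
  obtain ⟨M, hM⟩ := exists_majorant_le (cos_half_mul_pos (by linarith) hθ0 hαθ) hα
  exact ⟨M, fun x hx t ht => (abs_escauriazaSolution_le hj (by linarith) hθ0 hθ
    (by linarith [pi_pos]) hx ht).trans (hM _ (norm_nonneg _))⟩

lemma tendsto_escauriazaSolution (hj : j ≠ 0) (hα : 2 < α) (hθ0 : 0 ≤ θ)
    (hθ : 0 ≤ cos (θ / 2)) (hαθ : α * θ < π) (hx : x ∈ cone n θ) :
    Tendsto (escauriazaSolution α j x) (𝓝[<] 1) (𝓝 0) := by
  have hz : 0 < ‖toPlane j x + 1‖ := one_pos.trans_le (one_le_norm_toPlane_add_one hθ hx)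
  have htime : Tendsto (fun t : ℝ => 1 - t) (𝓝[<] 1) (𝓝[>] 0) := by
    refine tendsto_nhdsWithin_iff.2
      ⟨?_, eventually_mem_nhdsWithin.mono fun t ht => mem_Ioi.2 (sub_pos.2 ht)⟩
    simpa using ((continuous_sub_left (1 : ℝ)).tendsto 1).mono_left nhdsWithin_le_nhds
  have hradius : Tendsto (fun t : ℝ => ‖(1 - t)⁻¹ • (toPlane j x + 1)‖) (𝓝[<] 1) atTop := by
    simp only [norm_smul]
    exact (tendsto_norm_atTop_atTop.comp (tendsto_inv_nhdsGT_zero.comp htime)).atTop_mul_const hz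
  refine squeeze_zero_norm' ?_
    ((tendsto_majorant (cos_half_mul_pos (by linarith) hθ0 hαθ) hα).comp hradius)
  filter_upwards [Ioo_mem_nhdsLT zero_lt_one] with t ht
  exact abs_escauriazaSolution_le hj (by linarith) hθ0 hθ (by linarith [pi_pos]) hx
    ⟨ht.1.le, ht.2⟩

end Solution

/-- Escauriaza's counterexample: for `θ < π/2`, the cone `𝒪_θ` fails backward
uniqueness even for the pure heat equation -- there is a bounded smooth
nontrivial caloric function on `𝒪_θ × (0,1)` vanishing (in the sense of
continuous extension) at time `1`. -/
theorem cone_not_BU (n : ℕ) [NeZero n] (hn : 2 ≤ n) (θ : ℝ)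
    (hθ0 : 0 < θ) (hθ : θ < π / 2) :
    ∃ u : EuclideanSpace ℝ (Fin n) → ℝ → ℝ,
      ContDiffOn ℝ (⊤ : ℕ∞) (fun p : EuclideanSpace ℝ (Fin n) × ℝ => u p.1 p.2)
        (cone n θ ×ˢ Set.Ioo 0 1) ∧
      (∃ M : ℝ, ∀ x ∈ cone n θ, ∀ t ∈ Set.Ioo (0 : ℝ) 1, |u x t| ≤ M) ∧
      (∃ x ∈ cone n θ, ∃ t ∈ Set.Ioo (0 : ℝ) 1, u x t ≠ 0) ∧
      (∀ x ∈ cone n θ, ∀ t ∈ Set.Ioo (0 : ℝ) 1,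
        deriv (u x) t = lap (fun y => u y t) x) ∧
      (∀ x ∈ cone n θ, Filter.Tendsto (u x) (nhdsWithin 1 (Set.Iio 1)) (nhds 0)) := by
  obtain ⟨j, hj⟩ : ∃ j : Fin n, j ≠ 0 := ⟨⟨1, hn⟩, fun h => by simpa using congrArg Fin.val h⟩
  obtain ⟨α, hα, hαθ⟩ : ∃ α, 2 < α ∧ α < π / θ :=
    exists_between ((lt_div_iff₀ hθ0).2 (by linarith))
  rw [lt_div_iff₀ hθ0] at hαθ
  have hcos : 0 ≤ cos (θ / 2) := cos_nonneg_of_mem_Icc ⟨by linarith, by linarith⟩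
  obtain ⟨M, hM⟩ := exists_abs_escauriazaSolution_le hj hα hθ0.le hcos hαθ
  refine ⟨escauriazaSolution α j, ?smooth, ⟨M, ?bounded⟩, ?nontrivial, ?caloric, ?terminal⟩
  case smooth =>
    exact (contDiffOn_escauriazaSolution hcos).mono (prod_mono_right Ioo_subset_Iio_self)
  case bounded => exact fun x hx t ht => hM x hx t ⟨ht.1.le, ht.2⟩
  case nontrivial =>
    exact ⟨EuclideanSpace.single 0 1, single_mem_cone hθ0 (by linarith), 1 / 2, by norm_num,
      (escauriazaSolution_single_pos hj zero_le_one (by norm_num)).ne'⟩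
  case caloric => exact fun x hx t ht => deriv_escauriazaSolution_eq_lap hj hcos hx ht.2
  case terminal => exact fun x hx => tendsto_escauriazaSolution hj hα hθ0.le hcos hαθ hx
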